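/- Let G=(V,E) be a Bonnet-Myers sharp graph of diameter 2. Then there exist integers a≥1 and b≥0 such that G is isomorphic to G(a,b); equivalently, G can be obtained from the complete graph on |V| vertices by deleting a matching. -/

import Mathlib

open scoped Classical
open Finset

noncomputable section

/-- The degree of a vertex `x` in the graph `G`. -/
def deg {V : Type*} [Fintype V] (G : SimpleGraph V) (x : V) : ℕ :=
  (Finset.univ.filter (fun y => G.Adj x y)).card

/-- The diameter of `G`: the maximum of the combinatorial distance over all pairs of vertices. -/
def diam {V : Type*} [Fintype V] (G : SimpleGraph V) : ℕ :=
  Finset.univ.sup (fun xy : V × V => G.dist xy.1 xy.2)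

/-- The probability measure `μ_x^p` of the lazy simple random walk at `x` with idleness `p`. -/
def mu {V : Type*} [Fintype V] (G : SimpleGraph V) (p : ℝ) (x : V) : V → ℝ :=
  fun z => if z = x then p else if G.Adj x z then (1 - p) / (deg G x : ℝ) else 0

/-- The Wasserstein distance `W₁(μ₁, μ₂)` with respect to the combinatorial distance of `G`:
the infimum of the total transport cost over all transport plans from `μ₁` to `μ₂`. -/
def W1 {V : Type*} [Fintype V] (G : SimpleGraph V) (μ₁ μ₂ : V → ℝ) : ℝ :=
  sInf {c : ℝ | ∃ π : V → V → ℝ,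
    (∀ x y, 0 ≤ π x y ∧ π x y ≤ 1) ∧
    (∀ x, ∑ y, π x y = μ₁ x) ∧
    (∀ y, ∑ x, π x y = μ₂ y) ∧
    c = ∑ x, ∑ y, (G.dist x y : ℝ) * π x y}

/-- The `p`-Ollivier-Ricci curvature `κ_p(x,y) = 1 - W₁(μ_x^p, μ_y^p)`. -/
def kappa {V : Type*} [Fintype V] (G : SimpleGraph V) (p : ℝ) (x y : V) : ℝ :=
  1 - W1 G (mu G p x) (mu G p y)

/-- The Lin-Lu-Yau curvature `κ_LLY(x,y) = lim_{p→1} κ_p(x,y)/(1-p)`. -/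
def kappaLLY {V : Type*} [Fintype V] (G : SimpleGraph V) (x y : V) : ℝ :=
  Filter.limUnder (nhdsWithin 1 (Set.Iio 1)) (fun p => kappa G p x y / (1 - p))

/-- `G` is Bonnet-Myers sharp if the infimum of `κ_LLY` over the edges equals `2/diam(G)`. -/
def BMSharp {V : Type*} [Fintype V] (G : SimpleGraph V) : Prop :=
  sInf {r : ℝ | ∃ x y, G.Adj x y ∧ r = kappaLLY G x y} = 2 / (diam G : ℝ)

/-- `G` is obtained from the complete graph on its vertex set by deleting a matching
(a set of pairwise disjoint edges, encoded as a symmetric irreflexive relation in which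
every vertex has at most one partner). -/
def IsMatchingDeletionOfComplete {V : Type*} (G : SimpleGraph V) : Prop :=
  ∃ M : V → V → Prop, Symmetric M ∧ (∀ x, ¬ M x x) ∧
    (∀ x y z, M x y → M x z → y = z) ∧
    (∀ x y, G.Adj x y ↔ x ≠ y ∧ ¬ M x y)

/-- The graph `G(a,b)` on `2a+b` vertices `u_1, …, u_{2a}, v_1, …, v_b` (encoded as
`Fin (2a+b)`, with `u_i` the index `i-1` and `v_j` the index `2a+j-1`), in which two distinct
vertices are adjacent unless they form a pair `{u_{2i-1}, u_{2i}}`, i.e. `G(a,b)` is the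
complete graph `K_{2a+b}` with a matching of size `a` deleted. -/
def Gab (a b : ℕ) : SimpleGraph (Fin (2*a+b)) where
  Adj x y := x ≠ y ∧ ¬((x : ℕ) < 2*a ∧ (y : ℕ) < 2*a ∧ (x : ℕ)/2 = (y : ℕ)/2)
  symm := by
    constructor
    intro x y h
    exact ⟨h.1.symm, fun hc => h.2 ⟨hc.2.1, hc.1, hc.2.2.symm⟩⟩
  loopless := by constructor; intro x h; exact h.1 rfl

/-- The antitree `AT(a_1, …, a_N)` on the disjoint union of sets `V_1, …, V_N` with
`|V_k| = a_k` (0-indexed here: `V_k` is `Fin (a k)` for `k : Fin N`): two distinct vertices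
are adjacent iff they lie in the same set or in consecutive sets. -/
def antitree (N : ℕ) (a : Fin N → ℕ) : SimpleGraph (Σ k : Fin N, Fin (a k)) where
  Adj x y := x ≠ y ∧
    ((x.1 : ℕ) = (y.1 : ℕ) ∨ (x.1 : ℕ) + 1 = (y.1 : ℕ) ∨ (y.1 : ℕ) + 1 = (x.1 : ℕ))
  symm := by
    constructor
    intro x y h
    refine ⟨h.1.symm, ?_⟩
    rcases h.2 with h2 | h2 | h2
    · exact Or.inl h2.symm
    · exact Or.inr (Or.inr h2)
    · exact Or.inr (Or.inl h2)
  loopless := by constructor; intro x h; exact h.1 rfl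

section helpers
variable {V : Type*} [Fintype V] (G : SimpleGraph V)

def nb (x : V) : Finset V := Finset.univ.filter (fun y => G.Adj x y)

lemma mem_nb (x y : V) : y ∈ nb G x ↔ G.Adj x y := by simp [nb]

lemma sum_mu (p : ℝ) (x : V) (f : V → ℝ) :
    ∑ z, f z * mu G p x z = p * f x + (1 - p) / (deg G x : ℝ) * ∑ z ∈ nb G x, f z := by
  have h : ∀ z, f z * mu G p x z =
      (if z = x then p * f z else 0) + (if G.Adj x z then (1 - p) / (deg G x : ℝ) * f z else 0) := by
    intro z
    unfold mu
    by_cases h1 : z = x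
    · subst h1; simp; ring
    · by_cases h2 : G.Adj x z <;> simp [h1, h2]; ring
  rw [Finset.sum_congr rfl (fun z _ => h z), Finset.sum_add_distrib]
  congr 1
  · simp
  · rw [← Finset.sum_filter, Finset.mul_sum]; rfl

lemma deg_pos' {x y : V} (h : G.Adj x y) : (0:ℝ) < deg G x := by
  have : 0 < deg G x := by
    unfold deg
    exact Finset.card_pos.mpr ⟨y, by simpa using h⟩
  exact_mod_cast this

lemma mu_sum {x y : V} (h : G.Adj x y) (p : ℝ) : ∑ z, mu G p x z = 1 := by
  have := sum_mu G p x (fun _ => 1)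
  simp only [one_mul] at this
  rw [this]
  have h2 : ∑ z ∈ nb G x, (1:ℝ) = deg G x := by simp [nb, deg]
  rw [h2]
  have := deg_pos' G h
  field_simp; ring

lemma mu_nonneg {p : ℝ} (h0 : 0 ≤ p) (h1 : p ≤ 1) (x z : V) : 0 ≤ mu G p x z := by
  unfold mu
  split_ifs
  · exact h0
  · exact div_nonneg (by linarith) (by positivity)
  · exact le_rfl

lemma mu_le {p : ℝ} (h0 : 0 ≤ p) (h1 : p ≤ 1) {x y : V} (h : G.Adj x y) (z : V) :
    mu G p x z ≤ 1 := by
  rw [← mu_sum G h p]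
  exact Finset.single_le_sum (fun i _ => mu_nonneg G h0 h1 x i) (Finset.mem_univ z)

def IsPlan (μ₁ μ₂ : V → ℝ) (π : V → V → ℝ) : Prop :=
    (∀ x y, 0 ≤ π x y ∧ π x y ≤ 1) ∧
    (∀ x, ∑ y, π x y = μ₁ x) ∧
    (∀ y, ∑ x, π x y = μ₂ y)

def cost (π : V → V → ℝ) : ℝ := ∑ x, ∑ y, (G.dist x y : ℝ) * π x y

lemma W1_eq (μ₁ μ₂ : V → ℝ) :
    W1 G μ₁ μ₂ = sInf {c | ∃ π, IsPlan μ₁ μ₂ π ∧ c = cost G π} := by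
  unfold W1 IsPlan cost
  simp only [and_assoc]

lemma W1_le {μ₁ μ₂ : V → ℝ} {π : V → V → ℝ} (h : IsPlan μ₁ μ₂ π) :
    W1 G μ₁ μ₂ ≤ cost G π := by
  rw [W1_eq]
  apply csInf_le
  · refine ⟨0, ?_⟩
    rintro c ⟨π, hπ, rfl⟩
    exact Finset.sum_nonneg fun x _ => Finset.sum_nonneg fun y _ =>
      mul_nonneg (by positivity) (hπ.1 x y).1
  · exact ⟨π, h, rfl⟩

lemma le_W1 {p : ℝ} (h0 : 0 ≤ p) (h1 : p ≤ 1) {x y : V} (h : G.Adj x y) {B : ℝ}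
    (hB : ∀ π, IsPlan (mu G p x) (mu G p y) π → B ≤ cost G π) :
    B ≤ W1 G (mu G p x) (mu G p y) := by
  rw [W1_eq]
  apply le_csInf
  · refine ⟨_, fun a b => mu G p x a * mu G p y b, ⟨?_, ?_, ?_⟩, rfl⟩
    · intro a b
      have a1 := mu_nonneg G h0 h1 x a
      have a2 := mu_nonneg G h0 h1 y b
      exact ⟨mul_nonneg a1 a2, mul_le_one₀ (mu_le G h0 h1 h a) a2 (mu_le G h0 h1 h.symm b)⟩
    · intro a
      rw [← Finset.mul_sum, mu_sum G h.symm, mul_one]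
    · intro b
      rw [← Finset.sum_mul, mu_sum G h, one_mul]
  · rintro c ⟨π, hπ, rfl⟩
    exact hB π hπ

lemma cost_ge {μ₁ μ₂ : V → ℝ} {π : V → V → ℝ} (h : IsPlan μ₁ μ₂ π) (f : V → ℝ)
    (hf : ∀ a b, f a - f b ≤ G.dist a b) :
    ∑ z, f z * μ₁ z - ∑ z, f z * μ₂ z ≤ cost G π := by
  have e1 : ∑ z, f z * μ₁ z = ∑ a, ∑ b, f a * π a b := by
    refine Finset.sum_congr rfl fun a _ => ?_
    rw [← h.2.1 a, Finset.mul_sum]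
  have e2 : ∑ z, f z * μ₂ z = ∑ a, ∑ b, f b * π a b := by
    rw [Finset.sum_comm]
    refine Finset.sum_congr rfl fun a _ => ?_
    rw [← h.2.2 a, Finset.mul_sum]
  rw [e1, e2, ← Finset.sum_sub_distrib]
  refine Finset.sum_le_sum fun a _ => ?_
  rw [← Finset.sum_sub_distrib]
  refine Finset.sum_le_sum fun b _ => ?_
  rw [← sub_mul]
  exact mul_le_mul_of_nonneg_right (hf a b) (h.1 a b).1

lemma kappa_le {p : ℝ} (h0 : 0 ≤ p) (h1 : p < 1) {x y : V} (h : G.Adj x y) (f : V → ℝ)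
    (hf : ∀ a b, f a - f b ≤ G.dist a b) (hxy : f x - f y = 1) :
    kappa G p x y / (1 - p) ≤
      1 + (∑ z ∈ nb G y, f z) / deg G y - (∑ z ∈ nb G x, f z) / deg G x := by
  have := le_W1 G h0 h1.le h (fun π hπ => cost_ge G hπ f hf)
  rw [sum_mu, sum_mu] at this
  rw [div_le_iff₀ (by linarith)]
  unfold kappa
  have e1 : (1 - p) / (deg G x : ℝ) * ∑ z ∈ nb G x, f z
    = (1-p) * ((∑ z ∈ nb G x, f z) / deg G x) := by ring
  have e2 : (1 - p) / (deg G y : ℝ) * ∑ z ∈ nb G y, f z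
    = (1-p) * ((∑ z ∈ nb G y, f z) / deg G y) := by ring
  rw [e1, e2] at this
  have hx : f x = f y + 1 := by linarith
  rw [hx] at this
  linarith

lemma kappa_mono {p q : ℝ} (h0 : 0 ≤ p) (hpq : p ≤ q) (h1 : q < 1) {x y : V} (h : G.Adj x y) :
    kappa G p x y / (1 - p) ≤ kappa G q x y / (1 - q) := by
  have hp1 : 0 < 1 - p := by linarith
  have hq1 : 0 < 1 - q := by linarith
  set t := (1 - q) / (1 - p) with ht
  have ht0 : 0 < t := div_pos hq1 hp1
  have ht1 : t ≤ 1 := by rw [ht, div_le_one hp1]; linarith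
  have htp : t * (1 - p) = 1 - q := by rw [ht]; field_simp
  have hmu : ∀ w z, mu G q w z = t * mu G p w z + (1 - t) * (if z = w then 1 else 0) := by
    intro w z
    unfold mu
    split_ifs
    · linarith
    · rw [← htp]; ring
    · ring
  have key : (W1 G (mu G q x) (mu G q y) - (1 - t)) / t ≤ W1 G (mu G p x) (mu G p y) := by
    apply le_W1 G h0 (by linarith) h
    intro π hπ
    rw [div_le_iff₀ ht0]
    have hplan : IsPlan (mu G q x) (mu G q y)
        (fun a b => t * π a b + (1 - t) * (if a = x then (if b = y then 1 else 0) else 0)) := by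
      refine ⟨?_, ?_, ?_⟩
      · intro a b
        obtain ⟨u1, u2⟩ := hπ.1 a b
        constructor
        · have := mul_nonneg ht0.le u1
          beta_reduce
          split_ifs <;> linarith
        · have := mul_le_mul_of_nonneg_left u2 ht0.le
          beta_reduce
          split_ifs <;> linarith
      · intro a
        rw [Finset.sum_add_distrib, ← Finset.mul_sum, hπ.2.1, hmu, ← Finset.mul_sum]
        by_cases ha : a = x <;> simp [ha]
      · intro b
        rw [Finset.sum_add_distrib, ← Finset.mul_sum, hπ.2.2, hmu, ← Finset.mul_sum]
        simp
    have := W1_le G hplan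
    have hc : cost G (fun a b => t * π a b + (1 - t) * (if a = x then (if b = y then 1 else 0) else 0))
        = t * cost G π + (1 - t) := by
      unfold cost
      have hd : (G.dist x y : ℝ) = 1 := by
        exact_mod_cast SimpleGraph.dist_eq_one_iff_adj.mpr h
      have : ∀ a b, (G.dist a b : ℝ) * (t * π a b + (1 - t) * (if a = x then (if b = y then 1 else 0) else 0))
         = t * ((G.dist a b : ℝ) * π a b) +
          (if a = x then (if b = y then (1-t) * (G.dist a b : ℝ) else 0) else 0) := by
        intro a b
        split_ifs <;> ring
      simp only [this, Finset.sum_add_distrib, ← Finset.mul_sum]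
      congr 1
      rw [Finset.sum_eq_single x (by intro b _ hb; simp [hb]) (by simp)]
      simp [hd]
    linarith
  rw [div_le_iff₀ ht0] at key
  rw [div_le_div_iff₀ hp1 hq1, ← htp]
  unfold kappa
  have : 0 ≤ (1 - p) * ((1 - W1 G (mu G q x) (mu G q y)) - t * (1 - W1 G (mu G p x) (mu G p y))) :=
    mul_nonneg hp1.le (by linarith)
  linarith

lemma LLY_le {x y : V} (h : G.Adj x y) (f : V → ℝ)
    (hf : ∀ a b, f a - f b ≤ G.dist a b) (hxy : f x - f y = 1) :
    kappaLLY G x y ≤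
      1 + (∑ z ∈ nb G y, f z) / deg G y - (∑ z ∈ nb G x, f z) / deg G x := by
  have hne : (Set.Ioo (0:ℝ) 1).Nonempty := ⟨1/2, by norm_num, by norm_num⟩
  have hb : ∀ p ∈ Set.Ioo (0:ℝ) 1, kappa G p x y / (1 - p) ≤
      1 + (∑ z ∈ nb G y, f z) / deg G y - (∑ z ∈ nb G x, f z) / deg G x :=
    fun p hp => kappa_le G hp.1.le hp.2 h f hf hxy
  have hm : MonotoneOn (fun p => kappa G p x y / (1 - p)) (Set.Ioo (0:ℝ) 1) := by
    intro p hp q hq hpq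
    exact kappa_mono G hp.1.le hpq hq.2 h
  have := hm.tendsto_nhdsWithin_Ioo_left hne ⟨_, by rintro _ ⟨p, hp, rfl⟩; exact hb p hp⟩
  unfold kappaLLY
  rw [this.limUnder_eq]
  apply csSup_le (hne.image _)
  rintro _ ⟨p, hp, rfl⟩
  exact hb p hp

lemma BM_edge (hdiam : diam G = 2) (hBM : BMSharp G) {x y : V} (h : G.Adj x y) :
    1 ≤ kappaLLY G x y := by
  unfold BMSharp at hBM
  rw [hdiam] at hBM
  norm_num at hBM
  rw [← hBM]
  apply csInf_le
  · apply Set.Finite.bddBelow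
    apply (Set.finite_range (fun q : V × V => kappaLLY G q.1 q.2)).subset
    rintro _ ⟨x, y, _, rfl⟩
    exact ⟨(x, y), rfl⟩
  · exact ⟨x, y, h, rfl⟩

lemma avg_le (hconn : G.Connected) (hdiam : diam G = 2) (hBM : BMSharp G) (z : V) {x y : V}
    (h : G.Adj x y) (hxy : G.dist x z = G.dist y z + 1) :
    (∑ w ∈ nb G x, (G.dist w z : ℝ)) / deg G x ≤ (∑ w ∈ nb G y, (G.dist w z : ℝ)) / deg G y := by
  have h1 := BM_edge G hdiam hBM h
  have h2 := LLY_le G h (fun w => (G.dist w z : ℝ)) (by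
    intro a b
    have : G.dist a z ≤ G.dist a b + G.dist b z := hconn.dist_triangle
    have : (G.dist a z : ℝ) ≤ G.dist a b + G.dist b z := by exact_mod_cast this
    linarith) (by simp [hxy])
  linarith

lemma dist_le_two (hdiam : diam G = 2) (x y : V) : G.dist x y ≤ 2 := by
  rw [← hdiam]
  exact Finset.le_sup (f := fun xy : V × V => G.dist xy.1 xy.2) (Finset.mem_univ (x, y))

lemma dist_two (hconn : G.Connected) (hdiam : diam G = 2) {x y : V} (hne : x ≠ y)
    (h : ¬ G.Adj x y) : G.dist x y = 2 := by
  have h1 := dist_le_two G hdiam x y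
  have h2 : 0 < G.dist x y := hconn.pos_dist_of_ne hne
  have h3 : G.dist x y ≠ 1 := fun h' => h (SimpleGraph.dist_eq_one_iff_adj.mp h')
  omega

lemma common (hconn : G.Connected) {x y : V} (h : G.dist x y = 2) :
    ∃ w, G.Adj x w ∧ G.Adj w y := by
  obtain ⟨p, hp⟩ := hconn.exists_walk_length_eq_dist x y
  rw [h] at hp
  match p, hp with
  | .cons h1 (.cons h2 .nil), _ => exact ⟨_, h1, h2⟩

lemma avg_y (hconn : G.Connected) (hdiam : diam G = 2) (hBM : BMSharp G) {y z : V}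
    (h : G.Adj y z) : (∑ w ∈ nb G y, (G.dist w z : ℝ)) / deg G y ≤ 1 := by
  have := avg_le G hconn hdiam hBM z h (by simp [SimpleGraph.dist_eq_one_iff_adj.mpr h])
  have h2 : ∑ w ∈ nb G z, (G.dist w z : ℝ) = deg G z := by
    have : ∀ w ∈ nb G z, (G.dist w z : ℝ) = 1 := by
      intro w hw
      rw [mem_nb] at hw
      exact_mod_cast SimpleGraph.dist_eq_one_iff_adj.mpr hw.symm
    rw [Finset.sum_congr rfl this]; simp [nb, deg]
  rw [h2, div_self (deg_pos' G h.symm).ne'] at this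
  exact this

lemma deg_eq (x : V) : (deg G x : ℝ) = ∑ w ∈ nb G x, (1:ℝ) := by simp [nb, deg]

lemma claimA (hconn : G.Connected) (hdiam : diam G = 2) (hBM : BMSharp G) {x x' y z : V}
    (h : G.Adj y z) (hx : G.Adj y x) (hx' : G.Adj y x') (hne : x ≠ x')
    (d : G.dist x z = 2) (d' : G.dist x' z = 2) : False := by
  have h1 := avg_y G hconn hdiam hBM h
  rw [div_le_one (deg_pos' G h), deg_eq] at h1
  have h2 : ∑ w ∈ nb G y, (1 + (if w = x then (1:ℝ) else 0) + (if w = x' then 1 else 0)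
      - (if w = z then 1 else 0)) ≤ ∑ w ∈ nb G y, (G.dist w z : ℝ) := by
    refine Finset.sum_le_sum fun w _ => ?_
    by_cases a1 : w = z
    · subst a1
      have b1 : w ≠ x := by rintro rfl; simp at d
      have b2 : w ≠ x' := by rintro rfl; simp at d'
      simp [b1, b2]
    · have : 1 ≤ G.dist w z := hconn.pos_dist_of_ne a1
      have : (1:ℝ) ≤ G.dist w z := by exact_mod_cast this
      by_cases a2 : w = x
      · subst a2
        simp [a1, hne, d]; norm_num
      · by_cases a3 : w = x'
        · subst a3
          simp [a1, a2, d']; norm_num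
        · simpa [a1, a2, a3] using this
  rw [Finset.sum_sub_distrib, Finset.sum_add_distrib, Finset.sum_add_distrib] at h2
  simp only [Finset.sum_ite_eq', mem_nb, h, hx, hx', if_true] at h2
  linarith

lemma claimB (hconn : G.Connected) (hdiam : diam G = 2) (hBM : BMSharp G) {x x' y z : V}
    (h : G.Adj y z) (hx : G.Adj x y) (hx' : G.Adj x x')
    (d : G.dist x z = 2) (d' : G.dist x' z = 2) : False := by
  have h1 := avg_y G hconn hdiam hBM h
  have h3 := (avg_le G hconn hdiam hBM z hx
    (by rw [d, SimpleGraph.dist_eq_one_iff_adj.mpr h])).trans h1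
  rw [div_le_one (deg_pos' G hx), deg_eq] at h3
  have h2 : ∑ w ∈ nb G x, (1 + (if w = x' then (1:ℝ) else 0)) ≤
      ∑ w ∈ nb G x, (G.dist w z : ℝ) := by
    refine Finset.sum_le_sum fun w hw => ?_
    rw [mem_nb] at hw
    have a1 : w ≠ z := by
      rintro rfl
      rw [SimpleGraph.dist_eq_one_iff_adj.mpr hw] at d; omega
    have : 1 ≤ G.dist w z := hconn.pos_dist_of_ne a1
    have : (1:ℝ) ≤ G.dist w z := by exact_mod_cast this
    by_cases a2 : w = x'
    · subst a2; simp [d']; norm_num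
    · simpa [a2] using this
  rw [Finset.sum_add_distrib] at h2
  simp only [Finset.sum_ite_eq', mem_nb, hx', if_true] at h2
  linarith

lemma unique_partner (hconn : G.Connected) (hdiam : diam G = 2) (hBM : BMSharp G) {x x' z : V}
    (h1 : z ≠ x) (h2 : ¬ G.Adj z x) (h1' : z ≠ x') (h2' : ¬ G.Adj z x') : x = x' := by
  by_contra hne
  have d := dist_two G hconn hdiam h1.symm (fun h => h2 h.symm)
  have d' := dist_two G hconn hdiam h1'.symm (fun h => h2' h.symm)
  by_cases ha : G.Adj x x'
  · obtain ⟨y, hy1, hy2⟩ := common G hconn d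
    exact claimB G hconn hdiam hBM hy2 hy1 ha d d'
  · obtain ⟨y, hy1, hy2⟩ := common G hconn (dist_two G hconn hdiam hne ha)
    by_cases hz : G.Adj y z
    · exact claimA G hconn hdiam hBM hz hy1.symm hy2 hne d d'
    · have hyz : y ≠ z := by rintro rfl; exact h2 hy1.symm
      obtain ⟨w, hw1, hw2⟩ := common G hconn d
      exact claimB G hconn hdiam hBM hw2 hw1 hy1 d (dist_two G hconn hdiam hyz hz)

lemma iso_of_invol (σ : V → V) (hσ : ∀ x, σ (σ x) = x)
    (hadj : ∀ x y, G.Adj x y ↔ x ≠ y ∧ y ≠ σ x) :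
    ∃ a b : ℕ, Nonempty (G ≃g Gab a b) := by
  let r : V ≃ Fin (Fintype.card V) := Fintype.equivFin V
  let A := {x : V // r x < r (σ x)}
  let B := {x : V // σ x = x}
  let eA : Fin (Fintype.card A) ≃ A := (Fintype.equivFin A).symm
  let eB : Fin (Fintype.card B) ≃ B := (Fintype.equivFin B).symm
  let g : (A × Fin 2) ⊕ B → V := fun s => match s with
    | .inl (i, k) => if k = 0 then i.1 else σ i.1
    | .inr j => j.1
  have hg : Function.Bijective g := by
    constructor
    · rintro (⟨⟨i, hi⟩, k⟩ | ⟨j, hj⟩) (⟨⟨i', hi'⟩, k'⟩ | ⟨j', hj'⟩) h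
      · fin_cases k <;> fin_cases k' <;> simp [g] at h ⊢ 
        · exact Subtype.ext h
        · subst h; rw [hσ] at hi; exact absurd hi (not_lt.mpr hi'.le)
        · subst h; rw [hσ] at hi'; exact absurd hi (not_lt.mpr hi'.le)
        · have := congrArg σ h; rw [hσ, hσ] at this; exact Subtype.ext this
      · exfalso
        fin_cases k <;> simp [g] at h
        · subst h; rw [hj'] at hi; exact lt_irrefl _ hi
        · subst h; rw [hσ] at hj'; rw [← hj'] at hi; rw [hj', ← hj'] at hi; simp [hj'.symm] at hi
      · exfalso
        fin_cases k' <;> simp [g] at h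
        · subst h; rw [hj] at hi'; exact lt_irrefl _ hi'
        · subst h; rw [hσ] at hj; simp [hj.symm] at hi'
      · have h' : j = j' := h
        subst h'; rfl
    · intro v
      rcases lt_trichotomy (r v) (r (σ v)) with h | h | h
      · exact ⟨.inl (⟨v, h⟩, 0), by simp [g]⟩
      · exact ⟨.inr ⟨v, (r.injective h).symm⟩, by simp [g]⟩
      · exact ⟨.inl (⟨σ v, by rw [hσ]; exact h⟩, 1), by simp [g, hσ]⟩
  let a := Fintype.card A
  let b := Fintype.card B
  let E1 : (Fin a × Fin 2) ⊕ Fin b ≃ V :=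
    (Equiv.sumCongr (Equiv.prodCongr eA (Equiv.refl _)) eB).trans (Equiv.ofBijective g hg)
  let E2 : (Fin a × Fin 2) ⊕ Fin b ≃ Fin (2 * a + b) :=
    (Equiv.sumCongr finProdFinEquiv (Equiv.refl _)).trans
      (finSumFinEquiv.trans (finCongr (by rw [Nat.mul_comm])))
  have v1 : ∀ i k, ((E2 (.inl (i, k)) : Fin _) : ℕ) = k + 2 * i := by
    intro i k; simp [E2]
  have v2 : ∀ j, ((E2 (.inr j) : Fin _) : ℕ) = a * 2 + j := by
    intro j; simp [E2, Nat.mul_comm]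
  have w1 : ∀ i, E1 (.inl (i, 0)) = (eA i).1 := by intro i; simp [E1, g]
  have w2 : ∀ i, E1 (.inl (i, 1)) = σ (eA i).1 := by intro i; simp [E1, g]
  have w3 : ∀ j, E1 (.inr j) = (eB j).1 := by intro j; simp [E1, g]
  have s1 : ∀ i, σ (E1 (.inl (i, 0))) = E1 (.inl (i, 1)) := by intro i; rw [w1, w2]
  have s2 : ∀ i, σ (E1 (.inl (i, 1))) = E1 (.inl (i, 0)) := by intro i; rw [w1, w2, hσ]
  have s3 : ∀ j, σ (E1 (.inr j)) = E1 (.inr j) := by intro j; rw [w3]; exact (eB j).2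
  refine ⟨a, b, ⟨⟨E1.symm.trans E2, ?_⟩⟩⟩
  intro x y
  obtain ⟨s, rfl⟩ := E1.surjective x
  obtain ⟨t, rfl⟩ := E1.surjective y
  rw [hadj]
  simp only [Equiv.trans_apply, Equiv.symm_apply_apply, Gab, ne_eq, E1.injective.eq_iff,
    E2.injective.eq_iff]
  refine and_congr_right fun hst => not_congr ?_
  rcases s with ⟨i, k⟩ | j <;> rcases t with ⟨i', k'⟩ | j'
  · rw [v1, v1]
    have := i.2
    have := i'.2
    have hk : k = 0 ∨ k = 1 := by omega
    have hk' : k' = 0 ∨ k' = 1 := by omega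
    rcases hk with rfl | rfl <;> rcases hk' with rfl | rfl <;>
      simp only [s1, s2, E1.injective.eq_iff, Sum.inl.injEq, Prod.mk.injEq, Fin.ext_iff] at hst ⊢ <;>
      simp at hst ⊢ <;> omega
  · rw [v1, v2]
    have hk : k = 0 ∨ k = 1 := by omega
    rcases hk with rfl | rfl <;> simp [s1, s2, E1.injective.eq_iff] <;> omega
  · rw [v1, v2, s3]
    simp [E1.injective.eq_iff]; omega
  · rw [v2, v2, s3]
    simp only [E1.injective.eq_iff]
    constructor
    · omega
    · intro h; exact absurd h.symm hst

end helpers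

/-- Every Bonnet-Myers sharp graph of diameter 2 is isomorphic to `G(a,b)` for
some integers `a ≥ 1`, `b ≥ 0`; equivalently, it is obtained from the complete graph on its
vertex set by deleting a matching. -/
theorem stmt8 {V : Type*} [Fintype V] (G : SimpleGraph V) (hconn : G.Connected)
    (hdiam : diam G = 2) (hBM : BMSharp G) :
    (∃ a b : ℕ, 1 ≤ a ∧ Nonempty (G ≃g Gab a b)) ∧
    IsMatchingDeletionOfComplete G := by
  have hu := @unique_partner V _ G hconn hdiam hBM
  constructor
  · let σ : V → V := fun x => if h : ∃ y, x ≠ y ∧ ¬ G.Adj x y then h.choose else x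
    have hσ1 : ∀ x y, x ≠ y → ¬ G.Adj x y → σ x = y := by
      intro x y h1 h2
      have h : ∃ y, x ≠ y ∧ ¬ G.Adj x y := ⟨y, h1, h2⟩
      simp only [σ, dif_pos h]
      exact hu h.choose_spec.1 h.choose_spec.2 h1 h2
    have hσ2 : ∀ x, (¬ ∃ y, x ≠ y ∧ ¬ G.Adj x y) → σ x = x := by
      intro x h
      simp only [σ, dif_neg h]
    have hinv : ∀ x, σ (σ x) = x := by
      intro x
      by_cases h : ∃ y, x ≠ y ∧ ¬ G.Adj x y
      · obtain ⟨y, h1, h2⟩ := h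
        rw [hσ1 x y h1 h2]
        exact hσ1 y x h1.symm (fun h => h2 h.symm)
      · rw [hσ2 x h, hσ2 x h]
    have hadj : ∀ x y, G.Adj x y ↔ x ≠ y ∧ y ≠ σ x := by
      intro x y
      constructor
      · intro h
        refine ⟨h.ne, ?_⟩
        rintro rfl
        by_cases h' : ∃ y, x ≠ y ∧ ¬ G.Adj x y
        · obtain ⟨y, h1, h2⟩ := h'
          rw [hσ1 x y h1 h2] at h
          exact h2 h
        · rw [hσ2 x h'] at h
          exact h.ne rfl
      · rintro ⟨h1, h2⟩
        by_contra h3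
        exact h2 (hσ1 x y h1 h3).symm
    obtain ⟨a, b, ⟨e⟩⟩ := iso_of_invol G σ hinv hadj
    refine ⟨a, b, ?_, ⟨e⟩⟩
    by_contra ha
    have ha0 : a = 0 := by omega
    subst ha0
    have hle : diam G ≤ 1 := by
      apply Finset.sup_le
      rintro ⟨x, y⟩ _
      by_cases hxy : x = y
      · subst hxy; simp
      · have : G.Adj x y := by
          rw [← e.map_rel_iff]
          exact ⟨fun h => hxy (e.injective h), by simp⟩
        exact (SimpleGraph.dist_eq_one_iff_adj.mpr this).le
    omega
  · refine ⟨fun x y => x ≠ y ∧ ¬ G.Adj x y, ?_, ?_, ?_, ?_⟩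
    · intro x y h
      exact ⟨h.1.symm, fun h' => h.2 h'.symm⟩
    · intro x h
      exact h.1 rfl
    · intro x y z h h'
      exact hu h.1 h.2 h'.1 h'.2
    · intro x y
      constructor
      · intro h
        exact ⟨h.ne, fun h' => h'.2 h⟩
      · rintro ⟨h1, h2⟩
        by_contra h3
        exact h2 ⟨h1, h3⟩
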